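/- arXiv:2205.06331 — 2 statements merged into one kernel-verified Lean document; each statement's English description precedes it below -/
import Mathlib

section
/- For every λ ∈ (0,1) and every natural number q, the degree-q Chebyshev polynomial of the first kind satisfies T_q(1/λ) ≥ (1/2)·exp(q·√(2·log(1/λ))). -/
open Polynomial.Chebyshev Real

theorem sqrt_two_mul_log_le_arcosh {x : ℝ} (hx : 1 ≤ x) : √(2 * log x) ≤ arcosh x := by
  have log_le : log x ≤ arcosh x ^ 2 / 2 := by
    rw [log_le_iff_le_exp (by positivity)]
    simpa only [cosh_arcosh hx] using cosh_le_exp_half_sq (arcosh x)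
  exact sqrt_le_iff.mpr ⟨arcosh_nonneg hx, by linarith⟩

theorem eval_T_eq_cosh_mul_arcosh {x : ℝ} (hx : 1 ≤ x) (n : ℤ) :
    (T ℝ n).eval x = cosh (n * arcosh x) := by
  rw [← T_real_cosh, cosh_arcosh hx]

theorem cosh_mul_sqrt_two_mul_log_le_eval_T {x : ℝ} (hx : 1 ≤ x) (n : ℤ) :
    cosh (n * √(2 * log x)) ≤ (T ℝ n).eval x := by
  rw [eval_T_eq_cosh_mul_arcosh hx, cosh_le_cosh, abs_mul, abs_mul]
  have abs_sqrt_le : |√(2 * log x)| ≤ |arcosh x| :=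
    abs_le_abs_of_nonneg (sqrt_nonneg _) (sqrt_two_mul_log_le_arcosh hx)
  gcongr

theorem half_mul_exp_le_cosh (x : ℝ) : 1 / 2 * exp x ≤ cosh x := by
  rw [cosh_eq]
  linarith [exp_pos (-x)]

/-- Chebyshev growth estimate used in Lemma 1 of the paper.
For every `λ ∈ (0,1)` and every natural number `q`, the degree-`q` Chebyshev
polynomial of the first kind satisfies `T_q (1/λ) ≥ (1/2) exp (q √(2 log (1/λ)))`. -/
theorem stmt_3 (lam : ℝ) (hlam_pos : 0 < lam) (hlam_lt : lam < 1) (q : ℕ) :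
    (1 / 2) * Real.exp ((q : ℝ) * Real.sqrt (2 * Real.log (1 / lam))) ≤
      (Polynomial.Chebyshev.T ℝ (q : ℤ)).eval (1 / lam) := by
  have one_le_inv : 1 ≤ 1 / lam := one_le_one_div hlam_pos hlam_lt.le
  calc 1 / 2 * exp (q * √(2 * log (1 / lam)))
      ≤ cosh (q * √(2 * log (1 / lam))) := half_mul_exp_le_cosh _
    _ ≤ (T ℝ (q : ℤ)).eval (1 / lam) :=
      mod_cast cosh_mul_sqrt_two_mul_log_le_eval_T one_le_inv q
end

section
/- Let λ ≥ L² > 0, and let x_1, …, x_n ∈ ℝ^d with ‖x_k‖₂ ≤ L for all k. Define V_0 = λI and V_k = V_{k-1} + x_k x_kᵀ for k = 1, …, n. Then Σ_{k=1}^n ‖x_k‖_{V_{k-1}^{-1}} ≤ √(2·n·d·log(1 + nL²/(dλ))). -/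
open Matrix

/-- The weighted norm `‖x‖_V = √(xᵀ V x)` associated with a matrix `V`. -/
noncomputable def wNorm {d : ℕ} (V : Matrix (Fin d) (Fin d) ℝ) (x : Fin d → ℝ) : ℝ :=
  Real.sqrt (x ⬝ᵥ V.mulVec x)

/-- The Euclidean norm `‖x‖₂ = √(xᵀ x)` on `ℝ^d`. -/
noncomputable def eucNorm {d : ℕ} (x : Fin d → ℝ) : ℝ :=
  Real.sqrt (x ⬝ᵥ x)

/-!
Adding `x xᵀ` to `V` multiplies `det V` by `1 + ‖x‖²_{V⁻¹}`, so `log (det V_n / det V_0)` is the sum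
of the `log (1 + ‖x_k‖²_{V_{k-1}⁻¹})`. AM-GM on the eigenvalues bounds `det V_n` by the trace, which
grows by at most `L²` per step. Since `V_{k-1} ≥ λI`, every `‖x_k‖²_{V_{k-1}⁻¹}` is at most
`L² / λ ≤ 2`, where `q ≤ 2 log (1 + q)`; Cauchy–Schwarz passes from the squares to the norms.
-/

section RealInequalities

theorem min_two_le_two_mul_log_one_add {q : ℝ} (hq : 0 ≤ q) : min 2 q ≤ 2 * Real.log (1 + q) := by
  have hlog : 2 * q / (q + 2) ≤ Real.log (1 + q) := Real.le_log_one_add_of_nonneg hq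
  suffices min 2 q ≤ 2 * (2 * q / (q + 2)) by linarith
  rw [← mul_div_assoc, le_div_iff₀ (by linarith)]
  rcases le_total 2 q with h | h
  · rw [min_eq_left h]
    linarith
  · rw [min_eq_right h]
    nlinarith

variable {ι : Type*} (s : Finset ι) {f : ι → ℝ}

theorem prod_le_sum_div_card_pow (hf : ∀ i ∈ s, 0 ≤ f i) :
    ∏ i ∈ s, f i ≤ ((∑ i ∈ s, f i) / s.card) ^ s.card := by
  rcases s.eq_empty_or_nonempty with rfl | hs
  · simp
  have hmean := Real.geom_mean_le_arith_mean s (fun _ ↦ 1) f (by simp) (by simpa using hs) hf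
  simp only [Real.rpow_one, one_mul, Finset.sum_const, nsmul_eq_mul, mul_one] at hmean
  calc ∏ i ∈ s, f i = ((∏ i ∈ s, f i) ^ (s.card : ℝ)⁻¹) ^ s.card :=
        (Real.rpow_inv_natCast_pow (Finset.prod_nonneg hf) hs.card_ne_zero).symm
    _ ≤ ((∑ i ∈ s, f i) / s.card) ^ s.card :=
        pow_le_pow_left₀ (Real.rpow_nonneg (Finset.prod_nonneg hf) _) hmean _

theorem sum_sqrt_le_sqrt_card_mul_sum (hf : ∀ i ∈ s, 0 ≤ f i) :
    ∑ i ∈ s, √(f i) ≤ √(s.card * ∑ i ∈ s, f i) := by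
  refine Real.le_sqrt_of_sq_le (sq_sum_le_card_mul_sum_sq.trans_eq ?_)
  rw [Finset.sum_congr rfl fun i hi ↦ Real.sq_sqrt (hf i hi)]

end RealInequalities

section Matrix

variable {ι : Type*} [Fintype ι] [DecidableEq ι]

theorem det_add_vecMulVec {R : Type*} [CommRing R] {A : Matrix ι ι R} (hA : IsUnit A.det)
    (u v : ι → R) : (A + vecMulVec u v).det = A.det * (1 + v ⬝ᵥ A⁻¹ *ᵥ u) := by
  rw [vecMulVec_eq Unit, det_add_replicateCol_mul_replicateRow hA, Matrix.mul_assoc,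
    ← replicateCol_mulVec, det_unique (n := Unit), Matrix.add_apply, one_apply_eq,
    replicateRow_mul_replicateCol_apply]

open scoped ComplexOrder in
theorem det_le_trace_div_card_pow {𝕜 : Type*} [RCLike 𝕜] {A : Matrix ι ι 𝕜} (hA : A.PosSemidef) :
    A.det ≤ (A.trace / Fintype.card ι) ^ Fintype.card ι := by
  rw [hA.isHermitian.det_eq_prod_eigenvalues, hA.isHermitian.trace_eq_sum_eigenvalues]
  exact_mod_cast prod_le_sum_div_card_pow Finset.univ fun i _ ↦ hA.eigenvalues_nonneg i

-- `B - A` and `A⁻¹ - B⁻¹` are the two Schur complements of the block matrix `[[B, 1], [1, A⁻¹]]`.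
open scoped ComplexOrder in
theorem posSemidef_inv_sub_inv {𝕜 : Type*} [RCLike 𝕜] {A B : Matrix ι ι 𝕜} (hA : A.PosDef)
    (hAB : (B - A).PosSemidef) : (A⁻¹ - B⁻¹).PosSemidef := by
  have hB : B.PosDef := by simpa using hA.add_posSemidef hAB
  let := hB.isUnit.invertible
  let := hA.inv.isUnit.invertible
  have hblock : (fromBlocks B 1 1ᴴ A⁻¹).PosSemidef := by
    rw [hA.inv.fromBlocks₂₂]
    simpa [nonsing_inv_nonsing_inv A hA.det_pos.ne'.isUnit] using hAB
  simpa using (hB.fromBlocks₁₁ 1 A⁻¹).1 hblock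

end Matrix

section LeverageScore

variable {ι : Type*} [Fintype ι] [DecidableEq ι]

/-- The leverage score `‖v‖²_{V⁻¹} = vᵀ V⁻¹ v` of `v` relative to an invertible matrix `V`;
`wNorm V⁻¹ v` is its square root. -/
noncomputable def leverageScore (V : Matrix ι ι ℝ) (v : ι → ℝ) : ℝ :=
  v ⬝ᵥ V⁻¹ *ᵥ v

theorem leverageScore_nonneg {V : Matrix ι ι ℝ} (hV : V.PosSemidef) (v : ι → ℝ) :
    0 ≤ leverageScore V v :=
  hV.inv.dotProduct_mulVec_nonneg v

theorem leverageScore_anti {A B : Matrix ι ι ℝ} (hA : A.PosDef) (hAB : (B - A).PosSemidef)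
    (v : ι → ℝ) : leverageScore B v ≤ leverageScore A v := by
  have hdiff := (posSemidef_inv_sub_inv hA hAB).dotProduct_mulVec_nonneg v
  rwa [sub_mulVec, dotProduct_sub, sub_nonneg] at hdiff

theorem leverageScore_smul_one {c : ℝ} (hc : c ≠ 0) (v : ι → ℝ) :
    leverageScore (c • (1 : Matrix ι ι ℝ)) v = v ⬝ᵥ v / c := by
  have hinv : (c • (1 : Matrix ι ι ℝ))⁻¹ = c⁻¹ • 1 :=
    inv_eq_left_inv (by simp [smul_smul, hc])
  rw [leverageScore, hinv, smul_mulVec, one_mulVec, dotProduct_smul, smul_eq_mul, inv_mul_eq_div]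

end LeverageScore

section DesignMatrix

variable {ι : Type*}

/-- The design matrix `A + x₀ x₀ᵀ + ⋯ + xₙ₋₁ xₙ₋₁ᵀ` with regularizer `A`. The vectors are indexed
from `0`, so that it is the matrix relative to which `x n` is scored. -/
def designMatrix (A : Matrix ι ι ℝ) (x : ℕ → ι → ℝ) (n : ℕ) : Matrix ι ι ℝ :=
  A + ∑ k ∈ Finset.range n, vecMulVec (x k) (x k)

variable {A : Matrix ι ι ℝ} (x : ℕ → ι → ℝ) (n : ℕ)

theorem designMatrix_succ :
    designMatrix A x (n + 1) = designMatrix A x n + vecMulVec (x n) (x n) := by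
  rw [designMatrix, designMatrix, Finset.sum_range_succ, add_assoc]

theorem eq_designMatrix_of_succ {V : ℕ → Matrix ι ι ℝ}
    (hV : ∀ k, V (k + 1) = V k + vecMulVec (x k) (x k)) : V n = designMatrix (V 0) x n := by
  induction n with
  | zero => simp [designMatrix]
  | succ n ih => rw [hV, ih, designMatrix_succ]

theorem posSemidef_designMatrix_sub_self [Finite ι] : (designMatrix A x n - A).PosSemidef := by
  rw [designMatrix, add_sub_cancel_left]
  exact posSemidef_sum _ fun k _ ↦ by simpa using posSemidef_vecMulVec_self_star (x k)

theorem posDef_designMatrix [Finite ι] (hA : A.PosDef) : (designMatrix A x n).PosDef := by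
  simpa using hA.add_posSemidef (posSemidef_designMatrix_sub_self (A := A) x n)

variable [Fintype ι]

theorem trace_designMatrix :
    (designMatrix A x n).trace = A.trace + ∑ k ∈ Finset.range n, x k ⬝ᵥ x k := by
  simp only [designMatrix, trace_add, trace_sum, trace_vecMulVec]

variable [DecidableEq ι]

theorem det_designMatrix (hA : A.PosDef) :
    (designMatrix A x n).det =
      A.det * ∏ k ∈ Finset.range n, (1 + leverageScore (designMatrix A x k) (x k)) := by
  induction n with
  | zero => simp [designMatrix]
  | succ n ih =>
    rw [designMatrix_succ, det_add_vecMulVec (posDef_designMatrix x n hA).det_pos.ne'.isUnit, ih,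
      Finset.prod_range_succ, mul_assoc, leverageScore]

theorem leverageScore_designMatrix_le (hA : A.PosDef) (v : ι → ℝ) :
    leverageScore (designMatrix A x n) v ≤ leverageScore A v :=
  leverageScore_anti hA (posSemidef_designMatrix_sub_self x n) v

theorem leverageScore_designMatrix_nonneg (hA : A.PosDef) (v : ι → ℝ) :
    0 ≤ leverageScore (designMatrix A x n) v :=
  leverageScore_nonneg (posDef_designMatrix x n hA).posSemidef v

theorem sum_min_two_leverageScore_le_log_det (hA : A.PosDef) :
    ∑ k ∈ Finset.range n, min 2 (leverageScore (designMatrix A x k) (x k)) ≤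
      2 * Real.log ((designMatrix A x n).det / A.det) := by
  have hscore (k : ℕ) := leverageScore_designMatrix_nonneg x k hA (x k)
  rw [det_designMatrix x n hA, mul_div_cancel_left₀ _ hA.det_pos.ne',
    Real.log_prod fun k _ ↦ by linarith [hscore k], Finset.mul_sum]
  exact Finset.sum_le_sum fun k _ ↦ min_two_le_two_mul_log_one_add (hscore k)

theorem det_designMatrix_smul_one_div_le {lam : ℝ} (hlam : 0 < lam) :
    (designMatrix (lam • (1 : Matrix ι ι ℝ)) x n).det / (lam • (1 : Matrix ι ι ℝ)).det ≤
      (1 + (∑ k ∈ Finset.range n, x k ⬝ᵥ x k) / (Fintype.card ι * lam)) ^ Fintype.card ι := by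
  rcases isEmpty_or_nonempty ι with _ | _
  · simp
  have hdet := det_le_trace_div_card_pow
    (posDef_designMatrix x n (PosDef.one.smul hlam)).posSemidef
  rw [det_smul, det_one, mul_one, div_le_iff₀ (pow_pos hlam _), ← mul_pow]
  refine hdet.trans_eq (congrArg (· ^ Fintype.card ι) ?_)
  rw [trace_designMatrix, trace_smul, trace_one, smul_eq_mul]
  field_simp

theorem elliptical_potential {lam : ℝ} (hlam : 0 < lam) :
    ∑ k ∈ Finset.range n,
        min 2 (leverageScore (designMatrix (lam • (1 : Matrix ι ι ℝ)) x k) (x k)) ≤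
      2 * Fintype.card ι *
        Real.log (1 + (∑ k ∈ Finset.range n, x k ⬝ᵥ x k) / (Fintype.card ι * lam)) := by
  have hA : (lam • (1 : Matrix ι ι ℝ)).PosDef := PosDef.one.smul hlam
  have hlog := Real.log_le_log (div_pos (posDef_designMatrix x n hA).det_pos hA.det_pos)
    (det_designMatrix_smul_one_div_le x n hlam)
  rw [Real.log_pow] at hlog
  linarith [sum_min_two_leverageScore_le_log_det x n hA]

theorem sum_leverageScore_le {lam b : ℝ} (hlam : 0 < lam) (hb : b ≤ 2 * lam)
    (hx : ∀ k < n, x k ⬝ᵥ x k ≤ b) :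
    ∑ k ∈ Finset.range n, leverageScore (designMatrix (lam • (1 : Matrix ι ι ℝ)) x k) (x k) ≤
      2 * Fintype.card ι * Real.log (1 + n * b / (Fintype.card ι * lam)) := by
  have hscore : ∀ k ∈ Finset.range n,
      leverageScore (designMatrix (lam • (1 : Matrix ι ι ℝ)) x k) (x k) ≤ 2 := fun k hk ↦ by
    refine (leverageScore_designMatrix_le x k (PosDef.one.smul hlam) (x k)).trans ?_
    rw [leverageScore_smul_one hlam.ne', div_le_iff₀ hlam]
    exact (hx k (Finset.mem_range.1 hk)).trans hb
  have hsum_le : ∑ k ∈ Finset.range n, x k ⬝ᵥ x k ≤ n * b := by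
    simpa using Finset.sum_le_card_nsmul _ _ _ fun k hk ↦ hx k (Finset.mem_range.1 hk)
  have hsum_nonneg : 0 ≤ ∑ k ∈ Finset.range n, x k ⬝ᵥ x k :=
    Finset.sum_nonneg fun k _ ↦ by simpa using dotProduct_self_star_nonneg (x k)
  calc _ = ∑ k ∈ Finset.range n,
        min 2 (leverageScore (designMatrix (lam • (1 : Matrix ι ι ℝ)) x k) (x k)) :=
        Finset.sum_congr rfl fun k hk ↦ (min_eq_right (hscore k hk)).symm
    _ ≤ _ := elliptical_potential x n hlam
    _ ≤ _ := by gcongr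

end DesignMatrix

theorem stmt_15_general {d : ℕ} (lam L : ℝ) (hlam : 0 < lam) (hL : L ^ 2 ≤ 2 * lam)
    (n : ℕ) (x : ℕ → Fin d → ℝ) (hx : ∀ k, 1 ≤ k → k ≤ n → eucNorm (x k) ≤ L)
    (V : ℕ → Matrix (Fin d) (Fin d) ℝ)
    (hV0 : V 0 = lam • (1 : Matrix (Fin d) (Fin d) ℝ))
    (hVk : ∀ k, V (k + 1) = V k + Matrix.vecMulVec (x (k + 1)) (x (k + 1))) :
    (∑ k ∈ Finset.range n, wNorm (V k)⁻¹ (x (k + 1))) ≤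
      Real.sqrt (2 * n * d * Real.log (1 + n * L ^ 2 / (d * lam))) := by
  have hV (k : ℕ) : V k = designMatrix (lam • 1) (fun i ↦ x (i + 1)) k :=
    hV0 ▸ eq_designMatrix_of_succ (fun i ↦ x (i + 1)) k hVk
  have hsq : ∀ k < n, x (k + 1) ⬝ᵥ x (k + 1) ≤ L ^ 2 := fun k hk ↦
    (Real.sqrt_le_iff.1 (hx (k + 1) (by omega) (by omega))).2
  have hpotential := sum_leverageScore_le (fun i ↦ x (i + 1)) n hlam hL hsq
  simp only [← hV, Fintype.card_fin] at hpotential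
  have hscore (k : ℕ) : 0 ≤ leverageScore (V k) (x (k + 1)) :=
    hV k ▸ leverageScore_designMatrix_nonneg _ k (PosDef.one.smul hlam) _
  calc _ = ∑ k ∈ Finset.range n, √(leverageScore (V k) (x (k + 1))) := rfl
    _ ≤ √(n * ∑ k ∈ Finset.range n, leverageScore (V k) (x (k + 1))) := by
        simpa using sum_sqrt_le_sqrt_card_mul_sum (Finset.range n) fun k _ ↦ hscore k
    _ ≤ √(n * (2 * d * Real.log (1 + n * L ^ 2 / (d * lam)))) := by gcongr
    _ = _ := by congr 1; ring

/-- Cauchy–Schwarz consequence of the elliptical potential lemma;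
source of the `√T` factor in the regret bound of Theorem 2 of the paper. With
`λ ≥ L² > 0`, `‖x_k‖₂ ≤ L`, `V_0 = λI` and `V_k = V_{k-1} + x_k x_kᵀ`, one has
`∑_{k=1}^n ‖x_k‖_{V_{k-1}⁻¹} ≤ √(2 n d log (1 + n L²/(d λ)))`. -/
theorem stmt_15 {d : ℕ} (lam L : ℝ) (hL : 0 < L) (hlam : L ^ 2 ≤ lam)
    (n : ℕ) (x : ℕ → Fin d → ℝ) (hx : ∀ k, 1 ≤ k → k ≤ n → eucNorm (x k) ≤ L)
    (V : ℕ → Matrix (Fin d) (Fin d) ℝ)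
    (hV0 : V 0 = lam • (1 : Matrix (Fin d) (Fin d) ℝ))
    (hVk : ∀ k, V (k + 1) = V k + Matrix.vecMulVec (x (k + 1)) (x (k + 1))) :
    (∑ k ∈ Finset.range n, wNorm (V k)⁻¹ (x (k + 1))) ≤
      Real.sqrt (2 * n * d * Real.log (1 + n * L ^ 2 / (d * lam))) := by
  have hlam_pos : 0 < lam := (pow_pos hL 2).trans_le hlam
  exact stmt_15_general lam L hlam_pos (by linarith) n x hx V hV0 hVk
end
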